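/- arXiv:2411.15321 — 2 statements merged into one kernel-verified Lean document; each statement's English description precedes it below -/
import Mathlib

section
/- Let K be ℝ or ℂ, let V be a nonzero finite-dimensional K-vector space, and let 𝒰 = (U_1,…,U_m) be a direct sum decomposition of V with every factor U_j nonzero. Then the map Ψ_𝒰 : ℝ × D_𝒰 × N_𝒰 → Aut_K(𝒰) defined by Ψ_𝒰(s, x, ⊕_j B_j) = ⊕_j e^{s + x_j} B_j is a group isomorphism (where ℝ and D_𝒰 are additive groups), and Ψ_𝒰(s, x, B) ∈ SL*(V) if and only if s = 0. Consequently, for any group Γ, the induced map β_𝒰 : Hom(Γ, ℝ) × Hom(Γ, D_𝒰) × Hom(Γ, N_𝒰) → Hom(Γ, Aut_K(𝒰)), β_𝒰(δ, φ, ζ)(γ) = Ψ_𝒰(δ(γ), φ(γ), ζ(γ)), is a bijection which restricts to a bijection Hom(Γ, D_𝒰) × Hom(Γ, N_𝒰) → Hom(Γ, Aut_K(𝒰) ∩ SL*(V)) on triples with δ = 0. -/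
/-!
An element of `Aut_K(𝒰)` is determined by its restrictions to the factors `U_j`, so the whole
statement is read off from the numbers `|det (T|U_j)|`. If `T = Ψ(s, x, B)` with `B ∈ N_𝒰`, then
`log |det (T|U_j)| = dim(U_j) (s + x_j)` (`log_blockNorm_of_scaled`). Since `dim(U_j) > 0` this
recovers `s + x_j`; as `x ∈ D_𝒰`, summing over `j` recovers `s`, hence `x`, hence `B`. Conversely,
solving these equations for a given `T` produces `s` and `x`, and `B = Ψ(-s, -x, T)` lies in `N_𝒰`.
Multiplying over `j` gives `log |det T| = s · Σ_j dim(U_j)` (`det_eq_prod_det_restrict`), whence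
`Ψ(s, x, B) ∈ SL*(V)` iff `s = 0`. The claims about `Hom(Γ, -)` follow formally: the components of
the pointwise preimage of a homomorphism are homomorphisms because `Ψ` is injective and
multiplicative.
-/

open Module

/-- `Aut_K(𝒰)`: invertible endomorphisms preserving each factor of the decomposition. -/
def AutOfDecomp (K : Type) [Field K] {V : Type} [AddCommGroup V] [Module K V] {m : ℕ}
    (U : Fin m → Submodule K V) : Set (Module.End K V)ˣ :=
  {T | ∀ j, Submodule.map (↑T : Module.End K V) (U j) = U j}

/-- `N_𝒰`: block diagonal automorphisms whose blocks all have unit-magnitude determinant. -/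
noncomputable def NOfDecomp (K : Type) [RCLike K] {V : Type} [AddCommGroup V] [Module K V]
    [FiniteDimensional K V] {m : ℕ} (U : Fin m → Submodule K V) : Set (Module.End K V)ˣ :=
  {T | T ∈ AutOfDecomp K U ∧ ∀ j, ∃ Bj : (U j) →ₗ[K] (U j),
    (∀ v : U j, (Bj v : V) = (↑T : Module.End K V) v) ∧ ‖LinearMap.det Bj‖ = 1}

/-- `D_𝒰 = { x ∈ ℝ^m : Σ_j dim(U_j)·x_j = 0 }`. -/
def DOfDecomp (K : Type) [Field K] {V : Type} [AddCommGroup V] [Module K V] {m : ℕ}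
    (U : Fin m → Submodule K V) : Set (Fin m → ℝ) :=
  {x | ∑ j, (Module.finrank K (U j) : ℝ) * x j = 0}

section

variable {K : Type} [RCLike K] {V : Type} [AddCommGroup V] [Module K V] {m : ℕ}
  {U : Fin m → Submodule K V}

theorem AutOfDecomp.apply_mem {T : (Module.End K V)ˣ} (hT : T ∈ AutOfDecomp K U) (j : Fin m)
    {v : V} (hv : v ∈ U j) : (T : Module.End K V) v ∈ U j := by
  have h := hT j
  rw [← h]
  exact Submodule.mem_map_of_mem hv

theorem unit_injective (T : (Module.End K V)ˣ) : Function.Injective (T : Module.End K V) := by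
  intro v w h
  have := congrArg ((T⁻¹ : (Module.End K V)ˣ) : Module.End K V) h
  simpa [← Module.End.mul_apply] using this

/-- In finite dimension, an automorphism that maps each factor into itself maps it onto itself. -/
theorem AutOfDecomp.of_apply_mem [FiniteDimensional K V] {T : (Module.End K V)ˣ}
    (h : ∀ j, ∀ v ∈ U j, (T : Module.End K V) v ∈ U j) : T ∈ AutOfDecomp K U := by
  intro j
  refine Submodule.eq_of_le_of_finrank_eq ?_ ?_
  · rintro _ ⟨v, hv, rfl⟩
    exact h j v hv
  · exact (Submodule.equivMapOfInjective _ (unit_injective T) (U j)).finrank_eq.symm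

theorem AutOfDecomp.mul_mem [FiniteDimensional K V] {S T : (Module.End K V)ˣ}
    (hS : S ∈ AutOfDecomp K U) (hT : T ∈ AutOfDecomp K U) : S * T ∈ AutOfDecomp K U :=
  AutOfDecomp.of_apply_mem fun j _ hv => AutOfDecomp.apply_mem hS j (AutOfDecomp.apply_mem hT j hv)

/-- An automorphism is determined by its values on the factors of the decomposition. -/
theorem unit_ext (hU : DirectSum.IsInternal U) {S T : (Module.End K V)ˣ}
    (h : ∀ j, ∀ v ∈ U j, (S : Module.End K V) v = (T : Module.End K V) v) : S = T := by
  apply Units.ext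
  apply LinearMap.ext
  intro v
  have hv : v ∈ ⨆ j, U j := by
    rw [hU.submodule_iSup_eq_top]
    trivial
  induction hv using Submodule.iSup_induction' with
  | mem j v hv => exact h j v hv
  | zero => simp
  | add v w _ _ hv hw => rw [map_add, map_add, hv, hw]

/-- The determinant of a block diagonal endomorphism is the product of those of its blocks. -/
theorem det_eq_prod_det_restrict [FiniteDimensional K V] (hU : DirectSum.IsInternal U)
    {f : V →ₗ[K] V} (hf : ∀ j, ∀ v ∈ U j, f v ∈ U j) :
    LinearMap.det f = ∏ j, LinearMap.det (f.restrict (hf j)) := by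
  classical
  let b : (j : Fin m) → Basis _ K (U j) := fun j ↦ Module.Free.chooseBasis K (U j)
  rw [← LinearMap.det_toMatrix (hU.collectedBasis b),
    LinearMap.toMatrix_directSum_collectedBasis_eq_blockDiagonal' hU hU b b hf,
    (Matrix.blockTriangular_blockDiagonal' _).det_fintype]
  refine Finset.prod_congr rfl fun j _ => ?_
  rw [← LinearMap.det_toMatrix (b j)]
  refine Eq.trans ?_ (Matrix.det_submatrix_equiv_self
    (Equiv.sigmaSubtype (β := fun j => Module.Free.ChooseBasisIndex K (U j)) j) _)
  congr 1
  ext ⟨⟨i, a⟩, rfl⟩ ⟨⟨i', c⟩, h⟩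
  obtain rfl : i' = i := h
  exact Matrix.blockDiagonal'_apply_eq
    (fun k => LinearMap.toMatrix (b k) (b k) (f.restrict (hf k))) _ _ _

open Classical in
/-- `|det (T|U_j)|`, the magnitude of the determinant of the `j`-th block of `T`; the junk value
`0` is used when `T` does not map `U_j` into itself. -/
noncomputable def blockNorm (U : Fin m → Submodule K V) (T : (Module.End K V)ˣ) (j : Fin m) : ℝ :=
  if h : ∀ v ∈ U j, (T : Module.End K V) v ∈ U j then
    ‖LinearMap.det (LinearMap.restrict (T : Module.End K V) h)‖ else 0

/-- `blockNorm` may be computed with any endomorphism of `U_j` that agrees with `T`. -/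
theorem blockNorm_eq {T : (Module.End K V)ˣ} {j : Fin m} (C : U j →ₗ[K] U j)
    (hC : ∀ v : U j, (C v : V) = (T : Module.End K V) v) :
    blockNorm U T j = ‖LinearMap.det C‖ := by
  have h : ∀ v ∈ U j, (T : Module.End K V) v ∈ U j := fun v hv => by
    rw [← hC ⟨v, hv⟩]
    exact (C ⟨v, hv⟩).2
  have hr : LinearMap.restrict (T : Module.End K V) h = C := by
    ext v
    exact (hC v).symm
  rw [blockNorm, dif_pos h, hr]

theorem blockNorm_eq_restrict {T : (Module.End K V)ˣ} (hT : T ∈ AutOfDecomp K U) (j : Fin m) :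
    blockNorm U T j = ‖LinearMap.det (LinearMap.restrict (T : Module.End K V)
      (fun _ hv => AutOfDecomp.apply_mem hT j hv : ∀ v ∈ U j, (T : Module.End K V) v ∈ U j))‖ :=
  blockNorm_eq _ fun _ => rfl

theorem blockNorm_pos [FiniteDimensional K V] {T : (Module.End K V)ˣ}
    (hT : T ∈ AutOfDecomp K U) (j : Fin m) : 0 < blockNorm U T j := by
  rw [blockNorm_eq_restrict hT, norm_pos_iff]
  refine IsUnit.ne_zero (LinearMap.isUnit_det _ ?_)
  rw [LinearMap.isUnit_iff_ker_eq_bot, LinearMap.ker_eq_bot]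
  intro v w h
  exact Subtype.ext (unit_injective T (congrArg Subtype.val h))

theorem blockNorm_mul {S T : (Module.End K V)ˣ}
    (hS : S ∈ AutOfDecomp K U) (hT : T ∈ AutOfDecomp K U) (j : Fin m) :
    blockNorm U (S * T) j = blockNorm U S j * blockNorm U T j := by
  rw [blockNorm_eq_restrict hS, blockNorm_eq_restrict hT, ← norm_mul, ← LinearMap.det_comp]
  exact blockNorm_eq _ fun _ => rfl

theorem norm_det_eq_prod_blockNorm [FiniteDimensional K V] (hU : DirectSum.IsInternal U)
    {T : (Module.End K V)ˣ} (hT : T ∈ AutOfDecomp K U) :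
    ‖LinearMap.det ((T : Module.End K V) : V →ₗ[K] V)‖ = ∏ j, blockNorm U T j := by
  rw [det_eq_prod_det_restrict hU (fun j _ hv => AutOfDecomp.apply_mem hT j hv), norm_prod]
  exact Finset.prod_congr rfl fun j _ => (blockNorm_eq_restrict hT j).symm

theorem mem_NOfDecomp_iff [FiniteDimensional K V] {T : (Module.End K V)ˣ} :
    T ∈ NOfDecomp K U ↔ T ∈ AutOfDecomp K U ∧ ∀ j, blockNorm U T j = 1 := by
  constructor
  · rintro ⟨hT, h⟩
    refine ⟨hT, fun j => ?_⟩
    obtain ⟨C, hC, hd⟩ := h j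
    rw [blockNorm_eq C hC, hd]
  · rintro ⟨hT, h⟩
    exact ⟨hT, fun j => ⟨_, fun _ => rfl, by rw [← blockNorm_eq_restrict hT, h]⟩⟩

theorem NOfDecomp.mul_mem [FiniteDimensional K V] {S T : (Module.End K V)ˣ}
    (hS : S ∈ NOfDecomp K U) (hT : T ∈ NOfDecomp K U) : S * T ∈ NOfDecomp K U := by
  rw [mem_NOfDecomp_iff] at *
  exact ⟨AutOfDecomp.mul_mem hS.1 hT.1, fun j => by
    rw [blockNorm_mul hS.1 hT.1, hS.2, hT.2, mul_one]⟩

theorem DOfDecomp.add_mem {x y : Fin m → ℝ}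
    (hx : x ∈ DOfDecomp K U) (hy : y ∈ DOfDecomp K U) : x + y ∈ DOfDecomp K U := by
  simp only [DOfDecomp, Set.mem_ofPred_eq, Pi.add_apply, mul_add, Finset.sum_add_distrib] at *
  rw [hx, hy, add_zero]

/-- If `T` equals `e^{y_j} S` on each `U_j`, then `T` preserves the decomposition when `S` does. -/
theorem AutOfDecomp.of_scaled [FiniteDimensional K V] {S T : (Module.End K V)ˣ} {y : Fin m → ℝ}
    (hS : S ∈ AutOfDecomp K U)
    (h : ∀ j, ∀ v ∈ U j, (T : Module.End K V) v =
      algebraMap ℝ K (Real.exp (y j)) • (S : Module.End K V) v) : T ∈ AutOfDecomp K U := by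
  refine AutOfDecomp.of_apply_mem fun j v hv => ?_
  rw [h j v hv]
  exact (U j).smul_mem _ (AutOfDecomp.apply_mem hS j hv)

/-- Scaling the `j`-th block by `e^{y_j}` shifts `log |det|` of that block by `dim(U_j) y_j`. -/
theorem log_blockNorm_of_scaled [FiniteDimensional K V] {S T : (Module.End K V)ˣ} {y : Fin m → ℝ}
    (hS : S ∈ AutOfDecomp K U)
    (h : ∀ j, ∀ v ∈ U j, (T : Module.End K V) v =
      algebraMap ℝ K (Real.exp (y j)) • (S : Module.End K V) v) (j : Fin m) :
    Real.log (blockNorm U T j) =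
      Module.finrank K (U j) * y j + Real.log (blockNorm U S j) := by
  have hT : blockNorm U T j = Real.exp (y j) ^ Module.finrank K (U j) * blockNorm U S j := by
    rw [blockNorm_eq_restrict hS, blockNorm_eq (algebraMap ℝ K (Real.exp (y j)) •
      LinearMap.restrict (S : Module.End K V)
        (fun _ hv => AutOfDecomp.apply_mem hS j hv : ∀ v ∈ U j, (S : Module.End K V) v ∈ U j))
      (fun v => (h j v v.2).symm), LinearMap.det_smul, norm_mul, norm_pow, norm_algebraMap',
      Real.norm_of_nonneg (Real.exp_pos _).le]
  rw [hT, Real.log_mul (by positivity) (blockNorm_pos hS j).ne', Real.log_pow, Real.log_exp]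

theorem finrank_factor_pos [FiniteDimensional K V] (hUne : ∀ j, U j ≠ ⊥) (j : Fin m) :
    (0 : ℝ) < Module.finrank K (U j) := by
  have : Nontrivial (U j) := (Submodule.nontrivial_iff_ne_bot).2 (hUne j)
  exact_mod_cast Module.finrank_pos

theorem sum_finrank_pos [FiniteDimensional K V] (hV : 0 < Module.finrank K V)
    (hU : DirectSum.IsInternal U) (hUne : ∀ j, U j ≠ ⊥) :
    (0 : ℝ) < ∑ j, (Module.finrank K (U j) : ℝ) := by
  refine Finset.sum_pos (fun j _ => finrank_factor_pos hUne j) ?_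
  rw [Finset.univ_nonempty_iff]
  by_contra hm
  rw [not_nonempty_iff] at hm
  -- with no factors at all, `V` would be the empty sum
  have htop := hU.submodule_iSup_eq_top
  rw [iSup_of_empty] at htop
  have := finrank_top K V
  rw [← htop, finrank_bot] at this
  omega

end

/-- the map `Ψ_𝒰(s, x, ⊕_j B_j) = ⊕_j e^{s+x_j} B_j` is a group isomorphism
`ℝ × D_𝒰 × N_𝒰 → Aut_K(𝒰)`, `Ψ_𝒰(s,x,B) ∈ SL*(V)` iff `s = 0`, and the induced map
`β_𝒰 : Hom(Γ,ℝ) × Hom(Γ,D_𝒰) × Hom(Γ,N_𝒰) → Hom(Γ,Aut_K(𝒰))` is a bijection restricting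
to a bijection `Hom(Γ,D_𝒰) × Hom(Γ,N_𝒰) → Hom(Γ, Aut_K(𝒰) ∩ SL*(V))` on triples with
`δ = 0`. -/
theorem statement5
    (K : Type) [RCLike K]
    (V : Type) [AddCommGroup V] [Module K V] [FiniteDimensional K V]
    (hV : 0 < Module.finrank K V)
    (m : ℕ) (U : Fin m → Submodule K V) (hU : DirectSum.IsInternal U)
    (hUne : ∀ j, U j ≠ ⊥)
    (Ψ : ℝ → (Fin m → ℝ) → (Module.End K V)ˣ → (Module.End K V)ˣ)
    (hΨ : ∀ s x B, ∀ j, ∀ v ∈ U j,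
      (↑(Ψ s x B) : Module.End K V) v =
        algebraMap ℝ K (Real.exp (s + x j)) • (↑B : Module.End K V) v)
    (Γ : Type) [Group Γ] :
    -- Ψ maps ℝ × D_𝒰 × N_𝒰 into Aut_K(𝒰)
    (∀ s x B, x ∈ DOfDecomp K U → B ∈ NOfDecomp K U → Ψ s x B ∈ AutOfDecomp K U) ∧
    -- Ψ is a group homomorphism
    (∀ s s' x x' B B', x ∈ DOfDecomp K U → x' ∈ DOfDecomp K U →
      B ∈ NOfDecomp K U → B' ∈ NOfDecomp K U →
      Ψ (s + s') (x + x') (B * B') = Ψ s x B * Ψ s' x' B') ∧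
    -- Ψ is bijective onto Aut_K(𝒰)
    (∀ T ∈ AutOfDecomp K U, ∃! p : ℝ × (Fin m → ℝ) × (Module.End K V)ˣ,
      p.2.1 ∈ DOfDecomp K U ∧ p.2.2 ∈ NOfDecomp K U ∧ Ψ p.1 p.2.1 p.2.2 = T) ∧
    -- Ψ(s,x,B) ∈ SL*(V) ↔ s = 0
    (∀ s x B, x ∈ DOfDecomp K U → B ∈ NOfDecomp K U →
      (‖LinearMap.det ((↑(Ψ s x B) : Module.End K V) : V →ₗ[K] V)‖ = 1 ↔ s = 0)) ∧
    -- β_𝒰 is a bijection onto Hom(Γ, Aut_K(𝒰))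
    (∀ ξ : Γ →* (Module.End K V)ˣ, (∀ γ, ξ γ ∈ AutOfDecomp K U) →
      ∃! p : (Γ → ℝ) × (Γ → Fin m → ℝ) × (Γ → (Module.End K V)ˣ),
        (∀ γ₁ γ₂, p.1 (γ₁ * γ₂) = p.1 γ₁ + p.1 γ₂) ∧
        (∀ γ₁ γ₂, p.2.1 (γ₁ * γ₂) = p.2.1 γ₁ + p.2.1 γ₂) ∧
        (∀ γ, p.2.1 γ ∈ DOfDecomp K U) ∧
        (∀ γ₁ γ₂, p.2.2 (γ₁ * γ₂) = p.2.2 γ₁ * p.2.2 γ₂) ∧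
        (∀ γ, p.2.2 γ ∈ NOfDecomp K U) ∧
        (∀ γ, ξ γ = Ψ (p.1 γ) (p.2.1 γ) (p.2.2 γ))) ∧
    -- β_𝒰(0, ·, ·) is a bijection onto Hom(Γ, Aut_K(𝒰) ∩ SL*(V))
    (∀ ξ : Γ →* (Module.End K V)ˣ,
      ((∀ γ, ξ γ ∈ AutOfDecomp K U) ∧
        (∀ γ, ‖LinearMap.det ((↑(ξ γ) : Module.End K V) : V →ₗ[K] V)‖ = 1)) →
      ∃! p : (Γ → Fin m → ℝ) × (Γ → (Module.End K V)ˣ),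
        (∀ γ₁ γ₂, p.1 (γ₁ * γ₂) = p.1 γ₁ + p.1 γ₂) ∧
        (∀ γ, p.1 γ ∈ DOfDecomp K U) ∧
        (∀ γ₁ γ₂, p.2 (γ₁ * γ₂) = p.2 γ₁ * p.2 γ₂) ∧
        (∀ γ, p.2 γ ∈ NOfDecomp K U) ∧
        (∀ γ, ξ γ = Ψ 0 (p.1 γ) (p.2 γ))) := by
  have hn := sum_finrank_pos hV hU hUne
  have hnj := finrank_factor_pos hUne
  have hlog : ∀ s x B, B ∈ NOfDecomp K U → ∀ j, Real.log (blockNorm U (Ψ s x B) j) =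
      Module.finrank K (U j) * (s + x j) := fun s x B hB j => by
    rw [mem_NOfDecomp_iff] at hB
    rw [log_blockNorm_of_scaled (y := fun j => s + x j) hB.1 (hΨ s x B) j, hB.2, Real.log_one,
      add_zero]
  have hsum : ∀ (s : ℝ) (x : Fin m → ℝ), x ∈ DOfDecomp K U →
      ∑ j, (Module.finrank K (U j) : ℝ) * (s + x j) =
        (∑ j, (Module.finrank K (U j) : ℝ)) * s := fun s x hx => by
    have hx' : ∑ j, (Module.finrank K (U j) : ℝ) * x j = 0 := hx
    simp only [mul_add, Finset.sum_add_distrib, hx', add_zero, Finset.sum_mul]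
  have hmaps : ∀ s x B, B ∈ AutOfDecomp K U → Ψ s x B ∈ AutOfDecomp K U := fun s x B hB =>
    AutOfDecomp.of_scaled (y := fun j => s + x j) hB (hΨ s x B)
  have hmul : ∀ s s' x x' B B', B' ∈ AutOfDecomp K U →
      Ψ (s + s') (x + x') (B * B') = Ψ s x B * Ψ s' x' B' := fun s s' x x' B B' hB' => by
    refine unit_ext hU fun j v hv => ?_
    have he : s + s' + (x + x') j = (s' + x' j) + (s + x j) := by
      rw [Pi.add_apply]
      ring
    rw [hΨ _ _ _ j v hv, Units.val_mul, Units.val_mul, Module.End.mul_apply, Module.End.mul_apply,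
      hΨ s' x' B' j v hv, map_smul, hΨ s x B j _ (AutOfDecomp.apply_mem hB' j hv), smul_smul, he,
      Real.exp_add, map_mul]
  have hinj : ∀ s s' x x' B B', x ∈ DOfDecomp K U → x' ∈ DOfDecomp K U →
      B ∈ NOfDecomp K U → B' ∈ NOfDecomp K U → Ψ s x B = Ψ s' x' B' →
      s = s' ∧ x = x' ∧ B = B' := by
    intro s s' x x' B B' hx hx' hB hB' h
    have hj : ∀ j, s + x j = s' + x' j := fun j => by
      have := hlog s x B hB j
      rw [h, hlog s' x' B' hB' j] at this
      exact (mul_left_cancel₀ (hnj j).ne' this).symm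
    have hs : s = s' := by
      refine mul_left_cancel₀ hn.ne' ?_
      rw [← hsum s x hx, ← hsum s' x' hx']
      simp only [hj]
    subst hs
    have hxx : x = x' := funext fun j => add_left_cancel (hj j)
    subst hxx
    refine ⟨rfl, rfl, unit_ext hU fun j v hv => ?_⟩
    have hc : algebraMap ℝ K (Real.exp (s + x j)) ≠ 0 := by
      simp [Real.exp_ne_zero]
    have := hΨ s x B j v hv
    rw [h, hΨ s x B' j v hv] at this
    exact (smul_right_injective V hc this).symm
  have hsurj : ∀ T ∈ AutOfDecomp K U, ∃ s x B, x ∈ DOfDecomp K U ∧ B ∈ NOfDecomp K U ∧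
      Ψ s x B = T := by
    intro T hT
    -- `s` is `log |det T| / dim V`, and `s + x_j` is the same quantity for the block of `T` on `U_j`.
    set s : ℝ := (∑ j, Real.log (blockNorm U T j)) / ∑ j, (Module.finrank K (U j) : ℝ) with hs
    set x : Fin m → ℝ := fun j => Real.log (blockNorm U T j) / Module.finrank K (U j) - s with hx
    refine ⟨s, x, Ψ (-s) (-x) T, ?_, ?_, ?_⟩
    · have : ∀ j, (Module.finrank K (U j) : ℝ) * x j =
          Real.log (blockNorm U T j) - Module.finrank K (U j) * s := fun j => by
        rw [hx, mul_sub, mul_div_cancel₀ _ (hnj j).ne']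
      simp only [DOfDecomp, Set.mem_ofPred_eq, this, Finset.sum_sub_distrib, ← Finset.sum_mul]
      rw [hs, mul_div_cancel₀ _ hn.ne', sub_self]
    · rw [mem_NOfDecomp_iff]
      refine ⟨hmaps _ _ _ hT, fun j => ?_⟩
      refine Real.eq_one_of_pos_of_log_eq_zero (blockNorm_pos (hmaps _ _ _ hT) j) ?_
      rw [log_blockNorm_of_scaled (y := fun j => -s + (-x) j) hT (hΨ _ _ _) j]
      have := (hnj j).ne'
      simp only [hx, Pi.neg_apply]
      field_simp
      ring
    · refine unit_ext hU fun j v hv => ?_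
      rw [hΨ _ _ _ j v hv, hΨ _ _ _ j v hv, smul_smul, ← map_mul, ← Real.exp_add, Pi.neg_apply,
        show s + x j + (-s + -x j) = 0 by ring, Real.exp_zero, map_one, one_smul]
  have hdet : ∀ s x B, x ∈ DOfDecomp K U → B ∈ NOfDecomp K U →
      (‖LinearMap.det ((↑(Ψ s x B) : Module.End K V) : V →ₗ[K] V)‖ = 1 ↔ s = 0) := by
    intro s x B hx hB
    have hA := hmaps s x B hB.1
    have hp : 0 < ∏ j, blockNorm U (Ψ s x B) j := Finset.prod_pos fun j _ => blockNorm_pos hA j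
    have hl : Real.log (∏ j, blockNorm U (Ψ s x B) j) =
        (∑ j, (Module.finrank K (U j) : ℝ)) * s := by
      rw [Real.log_prod fun j _ => (blockNorm_pos hA j).ne', ← hsum s x hx]
      exact Finset.sum_congr rfl fun j _ => hlog s x B hB j
    rw [norm_det_eq_prod_blockNorm hU hA]
    constructor
    · intro h
      rw [h, Real.log_one] at hl
      exact (mul_eq_zero.1 hl.symm).resolve_left hn.ne'
    · rintro rfl
      rw [mul_zero] at hl
      exact Real.eq_one_of_pos_of_log_eq_zero hp hl
  have hβ : ∀ ξ : Γ →* (Module.End K V)ˣ, (∀ γ, ξ γ ∈ AutOfDecomp K U) →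
      ∃ (δ : Γ → ℝ) (φ : Γ → Fin m → ℝ) (ζ : Γ → (Module.End K V)ˣ),
        (∀ γ₁ γ₂, δ (γ₁ * γ₂) = δ γ₁ + δ γ₂) ∧ (∀ γ₁ γ₂, φ (γ₁ * γ₂) = φ γ₁ + φ γ₂) ∧
        (∀ γ, φ γ ∈ DOfDecomp K U) ∧ (∀ γ₁ γ₂, ζ (γ₁ * γ₂) = ζ γ₁ * ζ γ₂) ∧
        (∀ γ, ζ γ ∈ NOfDecomp K U) ∧ (∀ γ, ξ γ = Ψ (δ γ) (φ γ) (ζ γ)) := by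
    intro ξ hξ
    choose δ φ ζ hφ hζ h using fun γ => hsurj (ξ γ) (hξ γ)
    have key : ∀ γ₁ γ₂, δ (γ₁ * γ₂) = δ γ₁ + δ γ₂ ∧ φ (γ₁ * γ₂) = φ γ₁ + φ γ₂ ∧
        ζ (γ₁ * γ₂) = ζ γ₁ * ζ γ₂ := fun γ₁ γ₂ =>
      hinj _ _ _ _ _ _ (hφ _) (DOfDecomp.add_mem (hφ _) (hφ _)) (hζ _)
        (NOfDecomp.mul_mem (hζ _) (hζ _)) (by rw [hmul _ _ _ _ _ _ (hζ γ₂).1, h, h, h, map_mul])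
    exact ⟨δ, φ, ζ, fun a b => (key a b).1, fun a b => (key a b).2.1, hφ,
      fun a b => (key a b).2.2, hζ, fun γ => (h γ).symm⟩
  refine ⟨fun s x B _ hB => hmaps s x B hB.1,
    fun s s' x x' B B' _ _ _ hB' => hmul s s' x x' B B' hB'.1, ?_, hdet, ?_, ?_⟩
  · intro T hT
    obtain ⟨s, x, B, hx, hB, h⟩ := hsurj T hT
    refine ⟨(s, x, B), ⟨hx, hB, h⟩, ?_⟩
    rintro ⟨s', x', B'⟩ ⟨hx', hB', h'⟩
    obtain ⟨h₁, h₂, h₃⟩ := hinj _ _ _ _ _ _ hx' hx hB' hB (h'.trans h.symm)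
    exact Prod.ext h₁ (Prod.ext h₂ h₃)
  · intro ξ hξ
    obtain ⟨δ, φ, ζ, hδ, hφ, hφD, hζ, hζN, h⟩ := hβ ξ hξ
    refine ⟨(δ, φ, ζ), ⟨hδ, hφ, hφD, hζ, hζN, h⟩, ?_⟩
    rintro ⟨δ', φ', ζ'⟩ ⟨-, -, hφD', -, hζN', h'⟩
    have key := fun γ => hinj _ _ _ _ _ _ (hφD' γ) (hφD γ) (hζN' γ) (hζN γ)
      ((h' γ).symm.trans (h γ))
    exact Prod.ext (funext fun γ => (key γ).1)
      (Prod.ext (funext fun γ => (key γ).2.1) (funext fun γ => (key γ).2.2))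
  · rintro ξ ⟨hξ, hξd⟩
    obtain ⟨δ, φ, ζ, -, hφ, hφD, hζ, hζN, h⟩ := hβ ξ hξ
    have hδ : ∀ γ, δ γ = 0 := fun γ =>
      (hdet _ _ _ (hφD γ) (hζN γ)).1 (by rw [← h γ]; exact hξd γ)
    simp only [hδ] at h
    refine ⟨(φ, ζ), ⟨hφ, hφD, hζ, hζN, h⟩, ?_⟩
    rintro ⟨φ', ζ'⟩ ⟨-, hφD', -, hζN', h'⟩
    have key := fun γ => hinj _ _ _ _ _ _ (hφD' γ) (hφD γ) (hζN' γ) (hζN γ)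
      ((h' γ).symm.trans (h γ))
    exact Prod.ext (funext fun γ => (key γ).2.1) (funext fun γ => (key γ).2.2)
end

section
/- Let K be ℝ or ℂ, let V be a finite-dimensional K-vector space, and let 𝒰 = (U_1,…,U_m) be a direct sum decomposition of V. Set C_𝒰 = ⊕_{j=1}^m e^{j − ⌊m/2⌋ − 1}·id_{U_j} ∈ GL(V). Then for every linear endomorphism A of V which is block upper triangular relative to 𝒰 (i.e. A(U_j') ⊆ U_j' for all j), the limit lim_{n→∞} C_𝒰^n A C_𝒰^{−n} exists in End_K(V) and equals ⊕_{j=1}^m π_j ∘ A ∘ ι_j. Moreover, the resulting map B_𝒰, from the set of block upper triangular endomorphisms to End_K(V), is a homomorphism of K-algebras (it is K-linear, multiplicative, and sends id_V to id_V). -/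
/-! The maps `π j` form a complete system of orthogonal idempotents, and composing `C` with `π j` on
either side multiplies `π j` by the scalar by which `C` acts on `U j`. Sandwiching `A` between two
copies of `1 = ∑ π i` gives `C ^ n * A * C ^ (-n) = ∑ i j, (exp (i - j)) ^ n • (π i * A * π j)`.
Block upper triangularity says `π i * A * π j = 0` for `j < i` (`proj_mul_mul_proj_eq_zero`), so
only the terms with `i ≤ j` occur: those with `i < j` decay geometrically and those with `i = j`
are constant. For multiplicativity, in `π j * A * π i * A' * π j` the first block vanishes for `i
< j` and the second for `j < i`. -/

open Module Filter Topology

/-- The partial sums `U_j' = U_1 ⊕ … ⊕ U_j` of a direct sum decomposition. -/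
def partSum {K : Type} [Field K] {V : Type} [AddCommGroup V] [Module K V] {m : ℕ}
    (U : Fin m → Submodule K V) (j : Fin m) : Submodule K V :=
  ⨆ i, ⨆ (_ : i ≤ j), U i

section Blocks

variable {K : Type} [RCLike K] {V : Type} [NormedAddCommGroup V] [NormedSpace K V]
  {m : ℕ} {U : Fin m → Submodule K V} {π : Fin m → (V →L[K] V)}

theorem ext_on_blocks (hU : DirectSum.IsInternal U) {S T : V →L[K] V}
    (h : ∀ i, ∀ v ∈ U i, S v = T v) : S = T := by
  ext v
  have hv : v ∈ ⨆ i, U i := by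
    rw [hU.submodule_iSup_eq_top]; trivial
  have hle : ⨆ i, U i ≤ LinearMap.eqLocus (S : V →ₗ[K] V) (T : V →ₗ[K] V) :=
    iSup_le fun i w hw => h i w hw
  exact hle hv

theorem proj_mem (hU : DirectSum.IsInternal U) (hπ₁ : ∀ j, ∀ v ∈ U j, π j v = v)
    (hπ₂ : ∀ i j, i ≠ j → ∀ v ∈ U i, π j v = 0) (j : Fin m) (v : V) : π j v ∈ U j := by
  have hv : v ∈ ⨆ i, U i := by
    rw [hU.submodule_iSup_eq_top]; trivial
  have hle : ⨆ i, U i ≤ (U j).comap (π j : V →ₗ[K] V) := by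
    refine iSup_le fun i w hw => ?_
    change π j w ∈ U j
    by_cases hij : i = j
    · subst hij
      rwa [hπ₁ i w hw]
    · rw [hπ₂ i j hij w hw]
      exact zero_mem _
  exact hle hv

theorem sum_proj (hU : DirectSum.IsInternal U) (hπ₁ : ∀ j, ∀ v ∈ U j, π j v = v)
    (hπ₂ : ∀ i j, i ≠ j → ∀ v ∈ U i, π j v = 0) : ∑ j, π j = 1 := by
  refine ext_on_blocks hU fun i v hv => ?_
  rw [_root_.sum_apply, Finset.sum_eq_single i]
  · exact hπ₁ i v hv
  · intro j _ hj
    exact hπ₂ i j hj.symm v hv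
  · simp

theorem proj_mul_proj (hU : DirectSum.IsInternal U) (hπ₁ : ∀ j, ∀ v ∈ U j, π j v = v)
    (hπ₂ : ∀ i j, i ≠ j → ∀ v ∈ U i, π j v = 0) (i j : Fin m) :
    π i * π j = if i = j then π i else 0 := by
  ext v
  have hm := proj_mem hU hπ₁ hπ₂ j v
  split_ifs with h
  · subst h
    exact hπ₁ i _ hm
  · exact hπ₂ j i (Ne.symm h) _ hm

/-- The blocks of a block upper triangular map below the diagonal vanish. -/
theorem proj_mul_mul_proj_eq_zero (hU : DirectSum.IsInternal U)
    (hπ₁ : ∀ j, ∀ v ∈ U j, π j v = v) (hπ₂ : ∀ i j, i ≠ j → ∀ v ∈ U i, π j v = 0)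
    {A : V →L[K] V} (hA : ∀ j, ∀ v ∈ partSum U j, A v ∈ partSum U j) {i j : Fin m}
    (hij : j < i) : π i * A * π j = 0 := by
  ext v
  have h1 : U j ≤ partSum U j := le_iSup₂_of_le j le_rfl le_rfl
  have h2 := hA j _ (h1 (proj_mem hU hπ₁ hπ₂ j v))
  have h3 : partSum U j ≤ LinearMap.ker (π i : V →ₗ[K] V) :=
    iSup₂_le fun k hk w hw => hπ₂ k i (hk.trans_lt hij).ne w hw
  exact h3 h2

theorem pow_mul_proj {C : V →L[K] V} {l : K} {P : V →L[K] V} (h : C * P = l • P) (n : ℕ) :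
    C ^ n * P = l ^ n • P := by
  induction n with
  | zero => simp
  | succ n ih => rw [pow_succ, mul_assoc, h, mul_smul_comm, ih, smul_smul, pow_succ']

theorem proj_mul_pow {C : V →L[K] V} {l : K} {P : V →L[K] V} (h : P * C = l • P) (n : ℕ) :
    P * C ^ n = l ^ n • P := by
  induction n with
  | zero => simp
  | succ n ih => rw [pow_succ, ← mul_assoc, ih, smul_mul_assoc, h, smul_smul, pow_succ]

/-- Conjugation by `C ^ n` scales the block `P * A * Q` by the `n`-th power of the ratio of the
eigenvalues of `C` on the blocks `P` and `Q`. -/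
theorem conj_block {C : (V →L[K] V)ˣ} {l l' : K} {P Q : V →L[K] V} (hl' : l' ≠ 0)
    (hP : (C : V →L[K] V) * P = l • P) (hQ : Q * (C : V →L[K] V) = l' • Q)
    (A : V →L[K] V) (n : ℕ) :
    (↑(C ^ n) : V →L[K] V) * (P * A * Q) * (↑((C ^ n)⁻¹) : V →L[K] V)
      = (l / l') ^ n • (P * A * Q) := by
  have h2 : Q * (↑((C ^ n)⁻¹) : V →L[K] V) = (l' ^ n)⁻¹ • Q := by
    rw [Units.mul_inv_eq_iff_eq_mul, smul_mul_assoc, Units.val_pow_eq_pow_val,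
      proj_mul_pow hQ, smul_smul, inv_mul_cancel₀ (pow_ne_zero n hl'), one_smul]
  calc _ = ((C : V →L[K] V) ^ n * P) * A * (Q * (↑((C ^ n)⁻¹) : V →L[K] V)) := by
        simp only [Units.val_pow_eq_pow_val, mul_assoc]
    _ = _ := by
        rw [pow_mul_proj hP, h2, smul_mul_assoc, smul_mul_assoc, mul_smul_comm, smul_smul,
          div_pow, div_eq_mul_inv]

end Blocks

/-- for `C_𝒰 = ⊕_j e^{j−⌊m/2⌋−1}·id_{U_j}` and any endomorphism `A` which is
block upper triangular relative to `𝒰`, the limit `lim_n C_𝒰^n A C_𝒰^{−n}` exists and equals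
`⊕_j π_j ∘ A ∘ ι_j = Σ_j π_j A π_j`; moreover the resulting block diagonalization map is a
`K`-algebra homomorphism on block upper triangular endomorphisms. -/
theorem statement6
    (K : Type) [RCLike K]
    (V : Type) [NormedAddCommGroup V] [NormedSpace K V] [FiniteDimensional K V]
    (m : ℕ) (U : Fin m → Submodule K V) (hU : DirectSum.IsInternal U)
    (π : Fin m → (V →L[K] V))
    (hπ₁ : ∀ j, ∀ v ∈ U j, π j v = v)
    (hπ₂ : ∀ i j, i ≠ j → ∀ v ∈ U i, π j v = 0)
    (C : (V →L[K] V)ˣ)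
    (hC : ∀ i : Fin m, ∀ v ∈ U i,
      (↑C : V →L[K] V) v =
        algebraMap ℝ K (Real.exp ((i : ℝ) + 1 - ((m / 2 : ℕ) : ℝ) - 1)) • v) :
    -- the limit exists and equals the block diagonalization
    (∀ A : V →L[K] V, (∀ j, ∀ v ∈ partSum U j, A v ∈ partSum U j) →
      Tendsto (fun n : ℕ =>
          (↑(C ^ n) : V →L[K] V) * A * (↑((C ^ n)⁻¹) : V →L[K] V))
        atTop (nhds (∑ j, π j * A * π j))) ∧
    -- the block diagonalization map is K-linear on block upper triangular maps
    (∀ A A' : V →L[K] V, (∀ j, ∀ v ∈ partSum U j, A v ∈ partSum U j) →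
      (∀ j, ∀ v ∈ partSum U j, A' v ∈ partSum U j) → ∀ c c' : K,
      (∑ j, π j * (c • A + c' • A') * π j) =
        c • (∑ j, π j * A * π j) + c' • (∑ j, π j * A' * π j)) ∧
    -- it is multiplicative on block upper triangular maps
    (∀ A A' : V →L[K] V, (∀ j, ∀ v ∈ partSum U j, A v ∈ partSum U j) →
      (∀ j, ∀ v ∈ partSum U j, A' v ∈ partSum U j) →
      (∑ j, π j * (A * A') * π j) = (∑ j, π j * A * π j) * (∑ j, π j * A' * π j)) ∧
    -- it sends the identity to the identity
    ((∑ j, π j * (1 : V →L[K] V) * π j) = 1) := by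
  have hsum := sum_proj hU hπ₁ hπ₂
  have hmul := proj_mul_proj hU hπ₁ hπ₂
  refine ⟨fun A hA => ?_, fun A A' _ _ c c' => ?_, fun A A' hA hA' => ?_, ?_⟩
  · set l : Fin m → K := fun i =>
      algebraMap ℝ K (Real.exp ((i : ℝ) + 1 - ((m / 2 : ℕ) : ℝ) - 1)) with hl
    have hl0 : ∀ i, l i ≠ 0 := fun i => by
      simp only [hl, ne_eq, map_eq_zero]
      exact Real.exp_ne_zero _
    have hCP : ∀ i, (C : V →L[K] V) * π i = l i • π i := fun i => by
      ext v
      exact hC i _ (proj_mem hU hπ₁ hπ₂ i v)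
    have hPC : ∀ i, π i * (C : V →L[K] V) = l i • π i := fun i => by
      refine ext_on_blocks hU fun k v hv => ?_
      change π i ((C : V →L[K] V) v) = l i • π i v
      rw [hC k v hv, map_smul]
      by_cases hk : k = i
      · rw [hk]
      · rw [hπ₂ k i hk v hv, smul_zero, smul_zero]
    have hexp : ∀ n : ℕ, (↑(C ^ n) : V →L[K] V) * A * (↑((C ^ n)⁻¹) : V →L[K] V)
        = ∑ i, ∑ j, (l i / l j) ^ n • (π i * A * π j) := fun n => by
      have hA1 : A = ∑ i, ∑ j, π i * A * π j := by
        simp only [← Finset.mul_sum, hsum, mul_one, ← Finset.sum_mul, one_mul]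
      conv_lhs => rw [hA1]
      simp only [Finset.mul_sum, Finset.sum_mul]
      exact Finset.sum_congr rfl fun i _ => Finset.sum_congr rfl fun j _ =>
        conj_block (hl0 j) (hCP i) (hPC j) A n
    have hlim : ∑ j, π j * A * π j = ∑ i, ∑ j, if i = j then π i * A * π j else 0 := by
      simp
    simp only [hexp]
    rw [hlim]
    refine tendsto_finsetSum _ fun i _ => tendsto_finsetSum _ fun j _ => ?_
    rcases lt_trichotomy i j with hij | hij | hij
    · rw [if_neg hij.ne]
      have hr : ‖l i / l j‖ < 1 := by
        simp only [hl, ← map_div₀, norm_algebraMap', ← Real.exp_sub]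
        rw [Real.norm_eq_abs, Real.abs_exp, Real.exp_lt_one_iff]
        have : (i : ℝ) < (j : ℝ) := by exact_mod_cast hij
        linarith
      simpa using (tendsto_pow_atTop_nhds_zero_of_norm_lt_one hr).smul_const (π i * A * π j)
    · subst hij
      simp [div_self (hl0 i)]
    · rw [if_neg hij.ne', proj_mul_mul_proj_eq_zero hU hπ₁ hπ₂ hA hij]
      simp
  · simp only [mul_add, add_mul, mul_smul_comm, smul_mul_assoc, Finset.sum_add_distrib,
      Finset.smul_sum]
  · rw [Finset.sum_mul]
    refine Finset.sum_congr rfl fun j _ => ?_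
    have hR : π j * A * π j * ∑ k, π k * A' * π k = π j * A * π j * A' * π j := by
      rw [Finset.mul_sum, Finset.sum_eq_single j]
      · calc _ = π j * A * (π j * π j) * A' * π j := by simp only [mul_assoc]
          _ = _ := by rw [hmul, if_pos rfl]
      · intro k _ hk
        calc _ = π j * A * (π j * π k) * A' * π k := by simp only [mul_assoc]
          _ = 0 := by rw [hmul, if_neg hk.symm]; simp
      · simp
    have hL : π j * (A * A') * π j = ∑ i, π j * A * π i * A' * π j := by
      simp only [← Finset.mul_sum, ← Finset.sum_mul, hsum, one_mul, mul_assoc]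
    rw [hR, hL, Finset.sum_eq_single j]
    · intro i _ hi
      rcases lt_or_gt_of_ne hi with h | h
      · rw [proj_mul_mul_proj_eq_zero hU hπ₁ hπ₂ hA h, zero_mul, zero_mul]
      · calc _ = π j * A * (π i * A' * π j) := by
              simp only [mul_assoc]
          _ = 0 := by rw [proj_mul_mul_proj_eq_zero hU hπ₁ hπ₂ hA' h, mul_zero]
    · simp
  · simp only [mul_one, hmul, if_true, hsum]
end
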